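/- arXiv:1905.10719 — 6 statements merged into one kernel-verified Lean document; each statement's English description precedes it below -/
import Mathlib

section
/- If a Banach algebra A is semi-amenable, then A has a bounded approximate identity. -/
open Filter Topology

structure BanachBimodule (A : Type) [NonUnitalNormedRing A] [NormedSpace ℂ A]
    (X : Type) [NormedAddCommGroup X] [NormedSpace ℂ X] where
  lsmul : A →L[ℂ] X →L[ℂ] X
  rsmul : A →L[ℂ] X →L[ℂ] X
  lsmul_mul : ∀ a b x, lsmul (a * b) x = lsmul a (lsmul b x)
  rsmul_mul : ∀ a b x, rsmul (a * b) x = rsmul b (rsmul a x)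
  lsmul_rsmul : ∀ a b x, rsmul b (lsmul a x) = lsmul a (rsmul b x)

namespace BanachBimodule

variable {A : Type} [NonUnitalNormedRing A] [NormedSpace ℂ A]
variable {X : Type} [NormedAddCommGroup X] [NormedSpace ℂ X]

/-- The dual Banach bimodule on `X →L[ℂ] ℂ`, with `(a • f) x = f (x • a)` and
`(f • a) x = f (a • x)`. -/
noncomputable def dual (M : BanachBimodule A X) :
    BanachBimodule A (X →L[ℂ] ℂ) where
  lsmul := ((ContinuousLinearMap.compL ℂ X X ℂ).flip).comp M.rsmul
  rsmul := ((ContinuousLinearMap.compL ℂ X X ℂ).flip).comp M.lsmul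
  lsmul_mul := by
    intro a b f
    ext x
    exact congrArg f (M.rsmul_mul a b x)
  rsmul_mul := by
    intro a b f
    ext x
    exact congrArg f (M.lsmul_mul a b x)
  lsmul_rsmul := by
    intro a b f
    ext x
    exact congrArg f (M.lsmul_rsmul b a x)

def IsDerivation (M : BanachBimodule A X) (D : A →L[ℂ] X) : Prop :=
  ∀ a b : A, D (a * b) = M.lsmul a (D b) + M.rsmul b (D a)

def IsInner (M : BanachBimodule A X) (D : A →L[ℂ] X) : Prop :=
  ∃ x : X, ∀ a : A, D a = M.lsmul a x - M.rsmul a x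

def IsSemiInner (M : BanachBimodule A X) (D : A →L[ℂ] X) : Prop :=
  ∃ η ξ : X, ∀ a : A, D a = M.lsmul a η - M.rsmul a ξ

def IsApproxSemiInner (M : BanachBimodule A X) (D : A →L[ℂ] X) : Prop :=
  ∃ (ι : Type) (l : Filter ι) (η ξ : ι → X), l.NeBot ∧
    ∀ a : A, Tendsto (fun i => M.lsmul a (η i) - M.rsmul a (ξ i)) l (𝓝 (D a))

end BanachBimodule

/-- A Banach algebra `A` is amenable if every continuous derivation from `A` into the dual of
any Banach `A`-bimodule is inner. -/
def Amenable (A : Type) [NonUnitalNormedRing A] [NormedSpace ℂ A] : Prop :=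
  ∀ (X : Type) [NormedAddCommGroup X] [NormedSpace ℂ X] [CompleteSpace X],
    ∀ (M : BanachBimodule A X) (D : A →L[ℂ] (X →L[ℂ] ℂ)),
      M.dual.IsDerivation D → M.dual.IsInner D

/-- A Banach algebra `A` is semi-amenable if every continuous derivation from `A` into the dual of
any Banach `A`-bimodule is semi-inner. -/
def SemiAmenable (A : Type) [NonUnitalNormedRing A] [NormedSpace ℂ A] : Prop :=
  ∀ (X : Type) [NormedAddCommGroup X] [NormedSpace ℂ X] [CompleteSpace X],
    ∀ (M : BanachBimodule A X) (D : A →L[ℂ] (X →L[ℂ] ℂ)),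
      M.dual.IsDerivation D → M.dual.IsSemiInner D

/-- A Banach algebra `A` is approximately semi-amenable if every continuous derivation from `A`
into the dual of any Banach `A`-bimodule is approximately semi-inner. -/
def ApproxSemiAmenable (A : Type) [NonUnitalNormedRing A] [NormedSpace ℂ A] : Prop :=
  ∀ (X : Type) [NormedAddCommGroup X] [NormedSpace ℂ X] [CompleteSpace X],
    ∀ (M : BanachBimodule A X) (D : A →L[ℂ] (X →L[ℂ] ℂ)),
      M.dual.IsDerivation D → M.dual.IsApproxSemiInner D

/-- A Banach algebra `A` is semi-contractible if every continuous derivation from `A` into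
any Banach `A`-bimodule is semi-inner. -/
def SemiContractible (A : Type) [NonUnitalNormedRing A] [NormedSpace ℂ A] : Prop :=
  ∀ (X : Type) [NormedAddCommGroup X] [NormedSpace ℂ X] [CompleteSpace X],
    ∀ (M : BanachBimodule A X) (D : A →L[ℂ] X),
      M.IsDerivation D → M.IsSemiInner D

/-- A Banach algebra `A` is approximately semi-contractible if every continuous derivation from `A`
into any Banach `A`-bimodule is approximately semi-inner. -/
def ApproxSemiContractible (A : Type) [NonUnitalNormedRing A] [NormedSpace ℂ A] : Prop :=
  ∀ (X : Type) [NormedAddCommGroup X] [NormedSpace ℂ X] [CompleteSpace X],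
    ∀ (M : BanachBimodule A X) (D : A →L[ℂ] X),
      M.IsDerivation D → M.IsApproxSemiInner D

theorem approx_aux {A : Type} [NonUnitalNormedRing A] [NormedSpace ℂ A]
    (B : A →L[ℂ] A →L[ℂ] A) (η : (A →L[ℂ] ℂ) →L[ℂ] ℂ)
    (h : ∀ (a : A) (f : A →L[ℂ] ℂ), f a = η (f.comp (B a)))
    (S : Finset A) (ε : ℝ) (hε : 0 < ε) :
    ∃ e : A, ‖e‖ ≤ ‖η‖ + 1 ∧ ∀ a ∈ S, ‖B a e - a‖ < ε := by
  classical
  let T : A →L[ℂ] (S → A) := ContinuousLinearMap.pi fun a : S => B a.1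
  let v : S → A := fun a => a.1
  have hR : 0 < ‖η‖ + 1 := by positivity
  have key : v ∈ closure (T '' Metric.closedBall 0 (‖η‖ + 1)) := by
    by_contra hv
    have hconv : Convex ℝ (T '' Metric.closedBall 0 (‖η‖ + 1)) :=
      (convex_closedBall (0 : A) (‖η‖ + 1)).is_linear_image
        (f := T) ⟨fun x y => map_add T x y, fun c x => by
          have := map_smul T (c : ℂ) x
          simpa using this⟩
    obtain ⟨φ, u, h1, h2⟩ := RCLike.geometric_hahn_banach_closed_point (𝕜 := ℂ)
      hconv.closure isClosed_closure hv
    have hb : ∀ z ∈ Metric.closedBall (0 : A) (‖η‖ + 1), ‖(φ.comp T) z‖ ≤ u := by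
      intro z hz
      obtain ⟨c, hc, hcz⟩ : ∃ c : ℂ, ‖c‖ ≤ 1 ∧ c * (φ.comp T) z = (‖(φ.comp T) z‖ : ℂ) := by
        obtain ⟨c, hc, hcz⟩ := RCLike.exists_norm_mul_eq_self ((φ.comp T) z)
        by_cases h0 : (φ.comp T) z = 0
        · exact ⟨0, by simp, by simp [h0]⟩
        · refine ⟨c⁻¹, by simp [hc], ?_⟩
          have hc0 : c ≠ 0 := by
            intro hh
            simp [hh] at hc
          rw [inv_mul_eq_iff_eq_mul₀ hc0]
          exact hcz.symm
      have hm : c • z ∈ Metric.closedBall (0 : A) (‖η‖ + 1) := by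
        simp only [mem_closedBall_zero_iff] at hz ⊢
        rw [norm_smul]
        nlinarith [norm_nonneg z, norm_nonneg c]
      have := h1 (T (c • z)) (subset_closure ⟨_, hm, rfl⟩)
      have e1 : φ (T (c • z)) = (‖(φ.comp T) z‖ : ℂ) := by
        rw [← hcz]; simp
      rw [e1] at this
      simpa using this.le
    have hu : 0 ≤ u := (norm_nonneg _).trans (hb 0 (by simp [hR.le]))
    have hn : ‖φ.comp T‖ ≤ u / (‖η‖ + 1) :=
      ContinuousLinearMap.opNorm_le_bound _ (by positivity) fun z =>
        LinearMap.bound_of_ball_bound' hR u ((φ.comp T : A →L[ℂ] ℂ) : A →ₗ[ℂ] ℂ) hb z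
    have hv2 : φ v = η (φ.comp T) := by
      have e2 : ∀ w : S → A, φ w = ∑ a : S,
          (φ.comp (ContinuousLinearMap.single ℂ (fun _ : S => A) a)) (w a) := by
        intro w
        conv_lhs => rw [← Finset.univ_sum_single w]
        simp
      have e3 : φ.comp T = ∑ a : S,
          (φ.comp (ContinuousLinearMap.single ℂ (fun _ : S => A) a)).comp (B a.1) := by
        ext z
        rw [ContinuousLinearMap.comp_apply, e2, _root_.sum_apply]
        rfl
      rw [e2, e3, map_sum]
      exact Finset.sum_congr rfl fun a _ => h _ _
    have h3 : ‖φ v‖ ≤ ‖η‖ * (u / (‖η‖ + 1)) := by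
      rw [hv2]
      exact (η.le_opNorm _).trans (by gcongr)
    have h4 : ‖η‖ * (u / (‖η‖ + 1)) ≤ u := by
      rw [mul_div_assoc', div_le_iff₀ hR]
      nlinarith
    have h5 : (φ v).re ≤ ‖φ v‖ := Complex.re_le_norm _
    have h6 : u < (φ v).re := h2
    linarith
  obtain ⟨_, ⟨e, he, rfl⟩, hd⟩ := Metric.mem_closure_iff.1 key ε hε
  refine ⟨e, by simpa using he, fun a ha => ?_⟩
  rw [dist_comm] at hd
  have := (dist_pi_lt_iff hε).1 hd ⟨a, ha⟩
  rwa [dist_eq_norm] at this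

theorem right_virtual {A : Type} [NonUnitalNormedRing A] [NormedSpace ℂ A]
    [IsScalarTower ℂ A A] [SMulCommClass ℂ A A]
    (hA : SemiAmenable A) : ∃ η : (A →L[ℂ] ℂ) →L[ℂ] ℂ,
      ∀ (a : A) (f : A →L[ℂ] ℂ), f a = η (f.comp (ContinuousLinearMap.mul ℂ A a)) := by
  let M : BanachBimodule A (A →L[ℂ] ℂ) :=
    { lsmul := 0
      rsmul := ((ContinuousLinearMap.compL ℂ A A ℂ).flip).comp (ContinuousLinearMap.mul ℂ A)
      lsmul_mul := by intros; simp
      rsmul_mul := by intros; ext; simp [mul_assoc]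
      lsmul_rsmul := by intros; simp }
  obtain ⟨η, ξ, h⟩ := hA (A →L[ℂ] ℂ) M (ContinuousLinearMap.id ℂ (A →L[ℂ] ℂ)).flip (by
    intro a b
    ext f
    simp [M, BanachBimodule.dual])
  refine ⟨η, fun a f => ?_⟩
  have := congrArg (fun F => F f) (h a)
  simpa [M, BanachBimodule.dual] using this

theorem left_virtual {A : Type} [NonUnitalNormedRing A] [NormedSpace ℂ A]
    [IsScalarTower ℂ A A] [SMulCommClass ℂ A A]
    (hA : SemiAmenable A) : ∃ η : (A →L[ℂ] ℂ) →L[ℂ] ℂ,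
      ∀ (a : A) (f : A →L[ℂ] ℂ), f a = η (f.comp ((ContinuousLinearMap.mul ℂ A).flip a)) := by
  let M : BanachBimodule A (A →L[ℂ] ℂ) :=
    { lsmul := ((ContinuousLinearMap.compL ℂ A A ℂ).flip).comp (ContinuousLinearMap.mul ℂ A).flip
      rsmul := 0
      lsmul_mul := by intros; ext; simp [mul_assoc]
      rsmul_mul := by intros; simp
      lsmul_rsmul := by intros; simp }
  obtain ⟨η, ξ, h⟩ := hA (A →L[ℂ] ℂ) M (ContinuousLinearMap.id ℂ (A →L[ℂ] ℂ)).flip (by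
    intro a b
    ext f
    simp [M, BanachBimodule.dual])
  refine ⟨-ξ, fun a f => ?_⟩
  have := congrArg (fun F => F f) (h a)
  simpa [M, BanachBimodule.dual] using this

/-- If a Banach algebra `A` is semi-amenable, then `A` has a bounded approximate identity,
i.e. a bounded net `(e_α)` with `a * e_α → a` and `e_α * a → a` in norm for every `a`. -/
theorem semiAmenable_hasBoundedApproximateIdentity
    (A : Type) [NonUnitalNormedRing A] [NormedSpace ℂ A]
    [IsScalarTower ℂ A A] [SMulCommClass ℂ A A] [CompleteSpace A]
    (hA : SemiAmenable A) :
    ∃ (ι : Type) (l : Filter ι) (e : ι → A), l.NeBot ∧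
      (∃ C : ℝ, ∀ i : ι, ‖e i‖ ≤ C) ∧
      (∀ a : A, Tendsto (fun i => a * e i) l (𝓝 a) ∧
        Tendsto (fun i => e i * a) l (𝓝 a)) := by
  classical
  obtain ⟨η, hη⟩ := right_virtual hA
  obtain ⟨ξ, hξ⟩ := left_virtual hA
  have main : ∀ p : Finset A × ℕ, ∃ e : A,
      ‖e‖ ≤ (‖η‖ + 1) + (‖ξ‖ + 1) + (‖η‖ + 1) * (‖ξ‖ + 1) ∧
      ∀ a ∈ p.1, ‖a * e - a‖ ≤ (1 / ((p.2 : ℝ) + 1)) * (‖ξ‖ + 2) ∧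
        ‖e * a - a‖ ≤ (1 / ((p.2 : ℝ) + 1)) * (‖η‖ + 2) := by
    intro p
    have hε : 0 < 1 / ((p.2 : ℝ) + 1) := by positivity
    obtain ⟨e, he, he'⟩ := approx_aux _ η hη p.1 _ hε
    obtain ⟨f, hf, hf'⟩ := approx_aux _ ξ hξ p.1 _ hε
    generalize 1 / ((p.2 : ℝ) + 1) = ε at *
    refine ⟨e + f - e * f, ?_, fun a ha => ⟨?_, ?_⟩⟩
    · calc ‖e + f - e * f‖ ≤ ‖e‖ + ‖f‖ + ‖e‖ * ‖f‖ :=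
            (norm_sub_le _ _).trans (add_le_add (norm_add_le _ _) (norm_mul_le _ _))
        _ ≤ _ := by gcongr
    · have h1 : ‖a * e - a‖ < ε := he' a ha
      have e1 : a * (e + f - e * f) - a = (a * e - a) - (a * e - a) * f := by
        simp only [mul_sub, mul_add, sub_mul, mul_assoc]; abel
      rw [e1]
      calc _ ≤ ‖a * e - a‖ + ‖a * e - a‖ * ‖f‖ :=
            (norm_sub_le _ _).trans (add_le_add le_rfl (norm_mul_le _ _))
        _ ≤ ε + ε * (‖ξ‖ + 1) := by gcongr
        _ = _ := by ring
    · have h1 : ‖f * a - a‖ < ε := hf' a ha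
      have e1 : (e + f - e * f) * a - a = (f * a - a) - e * (f * a - a) := by
        simp only [mul_sub, add_mul, sub_mul, mul_assoc]; abel
      rw [e1]
      calc _ ≤ ‖f * a - a‖ + ‖e‖ * ‖f * a - a‖ :=
            (norm_sub_le _ _).trans (add_le_add le_rfl (norm_mul_le _ _))
        _ ≤ ε + (‖η‖ + 1) * ε := by gcongr
        _ = _ := by ring
  choose e he he' using main
  have hlim : ∀ c : ℝ, Tendsto (fun p : Finset A × ℕ => (1 / ((p.2 : ℝ) + 1)) * c)
      atTop (𝓝 0) := by
    intro c
    have h1 : Tendsto (fun p : Finset A × ℕ => p.2) atTop atTop := by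
      rw [← prod_atTop_atTop_eq]; exact tendsto_snd
    simpa using ((tendsto_one_div_add_atTop_nhds_zero_nat (𝕜 := ℝ)).comp h1).mul_const c
  have hev : ∀ a : A, ∀ᶠ p : Finset A × ℕ in atTop, a ∈ p.1 := by
    intro a
    filter_upwards [eventually_ge_atTop (({a} : Finset A), 0)] with p hp
    exact hp.1 (by simp)
  refine ⟨Finset A × ℕ, atTop, e, inferInstance, ⟨_, he⟩, fun a => ⟨?_, ?_⟩⟩
  · rw [tendsto_iff_norm_sub_tendsto_zero]
    refine squeeze_zero' (Eventually.of_forall fun _ => norm_nonneg _) ?_ (hlim (‖ξ‖ + 2))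
    filter_upwards [hev a] with p hp using (he' p a hp).1
  · rw [tendsto_iff_norm_sub_tendsto_zero]
    refine squeeze_zero' (Eventually.of_forall fun _ => norm_nonneg _) ?_ (hlim (‖η‖ + 2))
    filter_upwards [hev a] with p hp using (he' p a hp).2
end

section
/- If a Banach algebra A is semi-contractible, then A has an identity element. -/
open Filter Topology

/-- If a Banach algebra `A` is semi-contractible, then `A` has an identity element. -/
theorem semiContractible_hasIdentity
    (A : Type) [NonUnitalNormedRing A] [NormedSpace ℂ A]
    [IsScalarTower ℂ A A] [SMulCommClass ℂ A A] [CompleteSpace A]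
    (hA : SemiContractible A) :
    ∃ e : A, ∀ a : A, e * a = a ∧ a * e = a := by
  obtain ⟨e, _, he⟩ := hA A
    { lsmul := ContinuousLinearMap.mul ℂ A
      rsmul := 0
      lsmul_mul := by intro a b x; simp [mul_assoc]
      rsmul_mul := by intro a b x; simp
      lsmul_rsmul := by intro a b x; simp }
    (ContinuousLinearMap.id ℂ A) (by intro a b; simp)
  obtain ⟨_, f, hf⟩ := hA A
    { lsmul := 0
      rsmul := (ContinuousLinearMap.mul ℂ A).flip
      lsmul_mul := by intro a b x; simp
      rsmul_mul := by intro a b x; simp [mul_assoc]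
      lsmul_rsmul := by intro a b x; simp }
    (ContinuousLinearMap.id ℂ A) (by intro a b; simp)
  have h1 : ∀ a : A, a * e = a := fun a => by simpa using (he a).symm
  have h2 : ∀ a : A, (-f) * a = a := fun a => by simpa using (hf a).symm
  have h3 : -f = e := by rw [← h1 (-f), h2 e]
  exact ⟨e, fun a => ⟨by rw [← h3]; exact h2 a, h1 a⟩⟩
end

section
/- Let A and B be Banach algebras and θ : B → A a continuous surjective algebra homomorphism. If B is semi-amenable, then A is semi-amenable. -/
open Filter Topology

/-- If `θ : B → A` is a continuous surjective algebra homomorphism between Banach algebras and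
`B` is semi-amenable, then `A` is semi-amenable. -/
theorem semiAmenable_of_continuous_epimorphism
    (A B : Type) [NonUnitalNormedRing A] [NormedSpace ℂ A]
    [IsScalarTower ℂ A A] [SMulCommClass ℂ A A] [CompleteSpace A]
    [NonUnitalNormedRing B] [NormedSpace ℂ B]
    [IsScalarTower ℂ B B] [SMulCommClass ℂ B B] [CompleteSpace B]
    (θ : B →ₙₐ[ℂ] A) (hcont : Continuous θ) (hsurj : Function.Surjective θ)
    (hB : SemiAmenable B) : SemiAmenable A := by
  intro X _ _ _ M D hD
  let T : B →L[ℂ] A := ⟨(θ : B →ₗ[ℂ] A), hcont⟩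
  have hT : ∀ a b : B, T (a * b) = T a * T b := fun a b => map_mul θ a b
  let N : BanachBimodule B X :=
    { lsmul := M.lsmul.comp T
      rsmul := M.rsmul.comp T
      lsmul_mul := fun a b x => by
        simp only [ContinuousLinearMap.comp_apply, hT, M.lsmul_mul]
      rsmul_mul := fun a b x => by
        simp only [ContinuousLinearMap.comp_apply, hT, M.rsmul_mul]
      lsmul_rsmul := fun a b x => M.lsmul_rsmul (T a) (T b) x }
  obtain ⟨η, ξ, h⟩ := hB X N (D.comp T) (fun a b => by
    have h1 := hD (T a) (T b)
    rw [← hT] at h1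
    exact h1)
  refine ⟨η, ξ, fun a => ?_⟩
  obtain ⟨b, rfl⟩ := hsurj a
  exact h b
end

section
/- Let A and B be Banach algebras and θ : B → A a continuous surjective algebra homomorphism. If B is approximately semi-amenable, then A is approximately semi-amenable. -/
open Filter Topology

/-- If `θ : B → A` is a continuous surjective algebra homomorphism between Banach algebras and
`B` is approximately semi-amenable, then `A` is approximately semi-amenable. -/
theorem approxSemiAmenable_of_continuous_epimorphism
    (A B : Type) [NonUnitalNormedRing A] [NormedSpace ℂ A]
    [IsScalarTower ℂ A A] [SMulCommClass ℂ A A] [CompleteSpace A]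
    [NonUnitalNormedRing B] [NormedSpace ℂ B]
    [IsScalarTower ℂ B B] [SMulCommClass ℂ B B] [CompleteSpace B]
    (θ : B →ₙₐ[ℂ] A) (hcont : Continuous θ) (hsurj : Function.Surjective θ)
    (hB : ApproxSemiAmenable B) : ApproxSemiAmenable A := by
  intro X _ _ _ M D hD
  let t : B →L[ℂ] A :=
    { toFun := θ
      map_add' := fun x y => map_add θ x y
      map_smul' := fun c x => map_smul θ c x
      cont := hcont }
  have ht : ∀ b, t b = θ b := fun _ => rfl
  let N : BanachBimodule B X :=
    { lsmul := M.lsmul.comp t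
      rsmul := M.rsmul.comp t
      lsmul_mul := by
        intro a b x
        simp only [ContinuousLinearMap.comp_apply, ht, map_mul, M.lsmul_mul]
      rsmul_mul := by
        intro a b x
        simp only [ContinuousLinearMap.comp_apply, ht, map_mul, M.rsmul_mul]
      lsmul_rsmul := fun a b x => M.lsmul_rsmul (t a) (t b) x }
  have hN : N.dual.IsDerivation (D.comp t) := by
    intro a b
    have h := hD (t a) (t b)
    have hm : t (a * b) = t a * t b := map_mul θ a b
    rw [← hm] at h
    exact h
  obtain ⟨ι, l, η, ξ, hl, h⟩ := hB X N (D.comp t) hN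
  refine ⟨ι, l, η, ξ, hl, fun a => ?_⟩
  obtain ⟨b, rfl⟩ := hsurj a
  exact h b
end

section
/- Let A be a semi-amenable Banach algebra and I a closed two-sided ideal of A. Then the quotient Banach algebra A/I is semi-amenable. -/
open Filter Topology

/-- If `A` is a semi-amenable Banach algebra and `I` is a closed two-sided ideal of `A`, then the
quotient Banach algebra `A/I` is semi-amenable.  The quotient is formalized abstractly: any
Banach algebra `Q` together with a surjective algebra homomorphism `π : A → Q` whose kernel is
`I` and whose norm is the quotient norm `‖π a‖ = inf { ‖a - b‖ : b ∈ I }` realizes `A/I`. -/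
theorem semiAmenable_quotient
    (A : Type) [NonUnitalNormedRing A] [NormedSpace ℂ A]
    [IsScalarTower ℂ A A] [SMulCommClass ℂ A A] [CompleteSpace A]
    (I : NonUnitalSubalgebra ℂ A)
    (hleft : ∀ a x : A, x ∈ I → a * x ∈ I) (hright : ∀ a x : A, x ∈ I → x * a ∈ I)
    (hclosed : IsClosed (I : Set A))
    (Q : Type) [NonUnitalNormedRing Q] [NormedSpace ℂ Q]
    [IsScalarTower ℂ Q Q] [SMulCommClass ℂ Q Q] [CompleteSpace Q]
    (π : A →ₙₐ[ℂ] Q) (hsurj : Function.Surjective π)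
    (hker : ∀ a : A, π a = 0 ↔ a ∈ I)
    (hnorm : ∀ a : A, ‖π a‖ = sInf ((fun b => ‖a - b‖) '' (I : Set A)))
    (hA : SemiAmenable A) : SemiAmenable Q := by
  intro X _ _ _ M D hD
  have hle : ∀ a : A, ‖π a‖ ≤ 1 * ‖a‖ := by
    intro a
    rw [hnorm a, one_mul]
    refine csInf_le ⟨0, ?_⟩ ⟨0, I.zero_mem, by simp⟩
    rintro _ ⟨b, _, rfl⟩
    exact norm_nonneg _
  let p : A →L[ℂ] Q := LinearMap.mkContinuous
    { toFun := fun a => π a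
      map_add' := fun a b => map_add π a b
      map_smul' := fun c a => map_smul π c a } 1 hle
  have hp : ∀ a, p a = π a := fun a => rfl
  have hpm : ∀ a b, p (a * b) = p a * p b := fun a b => map_mul π a b
  let N : BanachBimodule A X :=
    { lsmul := M.lsmul.comp p
      rsmul := M.rsmul.comp p
      lsmul_mul := by
        intro a b x
        simp only [ContinuousLinearMap.comp_apply, hpm, M.lsmul_mul]
      rsmul_mul := by
        intro a b x
        simp only [ContinuousLinearMap.comp_apply, hpm, M.rsmul_mul]
      lsmul_rsmul := by
        intro a b x
        exact M.lsmul_rsmul (p a) (p b) x }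
  obtain ⟨η, ξ, h⟩ := hA X N (D.comp p) (by
    intro a b
    have := hD (p a) (p b)
    rw [← hpm] at this
    exact this)
  refine ⟨η, ξ, fun q => ?_⟩
  obtain ⟨a, rfl⟩ := hsurj q
  exact h a
end

section
/- Every amenable Banach algebra is approximately semi-contractible. -/
open Filter Topology

/-- A point annihilated by every functional vanishing on a subspace lies in its closure. -/
theorem mem_topologicalClosure_of_forall_dual {E : Type} [NormedAddCommGroup E] [NormedSpace ℂ E]
    (p : Submodule ℂ E) (v : E)
    (h : ∀ f : E →L[ℂ] ℂ, (∀ y ∈ p, f y = 0) → f v = 0) : v ∈ p.topologicalClosure := by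
  by_contra hv
  have : IsClosed (p.topologicalClosure : Set E) := p.isClosed_topologicalClosure
  have hne : p.topologicalClosure.mkQL v ≠ 0 := by
    intro h0
    exact hv ((Submodule.Quotient.mk_eq_zero _).1 h0)
  obtain ⟨g, hg⟩ := SeparatingDual.exists_ne_zero (R := ℂ) hne
  refine hg (h (g.comp p.topologicalClosure.mkQL) ?_)
  intro y hy
  have : p.topologicalClosure.mkQL y = 0 :=
    (Submodule.Quotient.mk_eq_zero _).2 (p.le_topologicalClosure hy)
  rw [ContinuousLinearMap.comp_apply, this, map_zero]

theorem exists_approx_of_amenable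
    (A : Type) [NonUnitalNormedRing A] [NormedSpace ℂ A] (hA : Amenable A)
    (X : Type) [NormedAddCommGroup X] [NormedSpace ℂ X]
    (M : BanachBimodule A X) (D : A →L[ℂ] X) (hD : M.IsDerivation D)
    (s : Finset A) (ε : ℝ) (hε : 0 < ε) :
    ∃ x : X, ∀ a ∈ s, ‖(M.lsmul a x - M.rsmul a x) - D a‖ < ε := by
  classical
  obtain ⟨F, hF⟩ := hA (X →L[ℂ] ℂ) M.dual
    ((NormedSpace.inclusionInDoubleDual ℂ X).comp D) (by
      intro a b
      ext f
      change f (D (a * b)) = f (M.lsmul a (D b)) + f (M.rsmul b (D a))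
      rw [hD a b, map_add])
  have hF' : ∀ (a : A) (f : X →L[ℂ] ℂ),
      f (D a) = F (f.comp (M.lsmul a)) - F (f.comp (M.rsmul a)) := fun a f =>
    congrArg (fun G : (X →L[ℂ] ℂ) →L[ℂ] ℂ => G f) (hF a)
  let T : X →L[ℂ] (s → X) := ContinuousLinearMap.pi fun a => M.lsmul a.1 - M.rsmul a.1
  have hmem : (fun a : s => D a.1) ∈ (LinearMap.range T.toLinearMap).topologicalClosure := by
    apply mem_topologicalClosure_of_forall_dual
    intro f hf
    let g : s → (X →L[ℂ] ℂ) := fun a => f.comp (ContinuousLinearMap.single ℂ (fun _ : s => X) a)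
    have hfg : ∀ v : s → X, f v = ∑ a, g a (v a) := by
      intro v
      conv_lhs => rw [← Finset.univ_sum_single v, map_sum]
      rfl
    rw [hfg]
    have h0 : ∑ a : s, ((g a).comp (M.lsmul a.1) - (g a).comp (M.rsmul a.1)) = 0 := by
      ext x
      have := hf (T x) ⟨x, rfl⟩
      rw [hfg] at this
      simpa [T, sum_apply] using this
    have h1 := congrArg F h0
    rw [map_sum, map_zero] at h1
    rw [← h1]
    refine Finset.sum_congr rfl fun a _ => ?_
    rw [hF', map_sub]
  have hmem' : (fun a : s => D a.1) ∈ closure (Set.range T) := by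
    have := hmem
    rw [← SetLike.mem_coe, Submodule.topologicalClosure_coe, LinearMap.coe_range] at this
    exact this
  obtain ⟨_, ⟨x, rfl⟩, hx⟩ := Metric.mem_closure_iff.1 hmem' ε hε
  refine ⟨x, fun a ha => ?_⟩
  rw [dist_comm, dist_pi_lt_iff hε] at hx
  have := hx ⟨a, ha⟩
  rw [dist_eq_norm] at this
  exact this

/-- Every amenable Banach algebra is approximately semi-contractible. -/
theorem approxSemiContractible_of_amenable
    (A : Type) [NonUnitalNormedRing A] [NormedSpace ℂ A]
    [IsScalarTower ℂ A A] [SMulCommClass ℂ A A] [CompleteSpace A]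
    (hA : Amenable A) : ApproxSemiContractible A := by
  classical
  intro X _ _ _ M D hD
  have key : ∀ i : Finset A × ℕ, ∃ x : X, ∀ a ∈ i.1,
      ‖(M.lsmul a x - M.rsmul a x) - D a‖ < 1 / ((i.2 : ℝ) + 1) := fun i =>
    exists_approx_of_amenable A hA X M D hD i.1 _ (by positivity)
  choose η hη using key
  refine ⟨Finset A × ℕ, atTop, η, η, inferInstance, fun a => ?_⟩
  rw [Metric.tendsto_atTop]
  intro ε hε
  obtain ⟨n, hn⟩ := exists_nat_one_div_lt hε
  refine ⟨({a}, n), fun i hi => ?_⟩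
  rw [dist_eq_norm]
  have ha : a ∈ i.1 := hi.1 (Finset.mem_singleton_self a)
  have hni : (n : ℝ) ≤ i.2 := by exact_mod_cast hi.2
  calc _ < 1 / ((i.2 : ℝ) + 1) := hη i a ha
    _ ≤ 1 / ((n : ℝ) + 1) := by gcongr
    _ < ε := hn
end
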